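/- Let F be an hke collection, let A ∈ F, and let E ⊆ A. Then there exists a finite set D such that: (1) A ∩ D = E; (2) F ∪ {D} is an hke collection; and (3) |D − ⋃F| = |⋂F − E|. In particular, if ⋂F = ∅ then D ⊆ ⋃F. -/

import Mathlib

open Finset

/-- The union of a finite collection of finite sets. -/
def famUnion (Γ : Finset (Finset ℕ)) : Finset ℕ := Γ.sup id

/-- The intersection of a finite collection of finite sets
(equal to the usual intersection when the collection is nonempty). -/
def famInter (Γ : Finset (Finset ℕ)) : Finset ℕ :=
  (Γ.sup id).filter (fun x => ∀ A ∈ Γ, x ∈ A)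

/-- `F` is a hereditary König–Egerváry (hke) collection with `α(F) = α`:
`α` is a positive integer and `|⋃Γ| + |⋂Γ| = 2α` for every nonempty subcollection `Γ` of `F`. -/
def IsHKE (F : Finset (Finset ℕ)) (α : ℕ) : Prop :=
  0 < α ∧ ∀ Γ ⊆ F, Γ.Nonempty → (famUnion Γ).card + (famInter Γ).card = 2 * α

/-! In an hke collection `F` one has `|⋂Γ \ ⋃Δ| = |⋂Δ \ ⋃Γ|` for all nonempty `Γ, Δ ⊆ F`. Taking
`Δ = F \ Γ`, the points lying in exactly the members of `Γ` are as numerous as those lying in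
exactly the other members, so there is an injection `f` on `⋃F` that complements membership:
`f x ∈ B ↔ x ∉ B` for `B ∈ F`. Only the points of `⋂F` have to be sent outside `⋃F`.

Fix `A ∈ F`. By counting, every `B ∈ F` consists of exactly one element of each pair `{x, f x}`
with `x ∈ A`. Conversely any collection of such transversals is hke. Hence `D = E ∪ f(A \ E)`, the
transversal that meets `A` in `E`, can be added to `F`. -/

section FamUnionInter

variable {Γ Δ : Finset (Finset ℕ)} {x y : ℕ}

theorem mem_famUnion : x ∈ famUnion Γ ↔ ∃ B ∈ Γ, x ∈ B := by
  simp [famUnion, mem_sup]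

theorem mem_famInter (hΓ : Γ.Nonempty) : x ∈ famInter Γ ↔ ∀ B ∈ Γ, x ∈ B := by
  obtain ⟨C, hC⟩ := hΓ
  rw [famInter, mem_filter, and_iff_right_iff_imp]
  exact fun h => mem_famUnion.2 ⟨C, hC, h C hC⟩

theorem subset_famUnion {B : Finset ℕ} (hB : B ∈ Γ) : B ⊆ famUnion Γ :=
  le_sup (f := id) hB

theorem famInter_subset {B : Finset ℕ} (hB : B ∈ Γ) : famInter Γ ⊆ B :=
  fun _ hx => (mem_filter.1 hx).2 B hB

theorem famUnion_singleton (B : Finset ℕ) : famUnion {B} = B :=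
  sup_singleton

theorem famInter_singleton (B : Finset ℕ) : famInter {B} = B := by
  ext x
  simp [mem_famInter]

theorem famUnion_insert (C : Finset ℕ) (Γ : Finset (Finset ℕ)) :
    famUnion (insert C Γ) = C ∪ famUnion Γ :=
  sup_insert

theorem famInter_insert (C : Finset ℕ) (hΓ : Γ.Nonempty) :
    famInter (insert C Γ) = C ∩ famInter Γ := by
  ext x
  simp [mem_famInter, hΓ]

theorem mem_famInter_sdiff_famUnion (hΓ : Γ.Nonempty) :
    x ∈ famInter Γ \ famUnion Δ ↔ (∀ B ∈ Γ, x ∈ B) ∧ ∀ B ∈ Δ, x ∉ B := by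
  simp [mem_famInter hΓ, mem_famUnion]

theorem mem_famUnion_iff_notMem_famInter (hΓ : Γ.Nonempty) (h : ∀ B ∈ Γ, (y ∈ B ↔ x ∉ B)) :
    y ∈ famUnion Γ ↔ x ∉ famInter Γ := by
  rw [mem_famUnion, mem_famInter hΓ]
  push Not
  exact exists_congr fun B => and_congr_right (h B)

theorem mem_famInter_iff_notMem_famUnion (hΓ : Γ.Nonempty) (h : ∀ B ∈ Γ, (y ∈ B ↔ x ∉ B)) :
    y ∈ famInter Γ ↔ x ∉ famUnion Γ := by
  rw [mem_famUnion, mem_famInter hΓ]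
  push Not
  exact forall₂_congr h

theorem card_famInter_sdiff_famUnion_eq_add (C : Finset ℕ) (hΓ : Γ.Nonempty) :
    #(famInter Γ \ famUnion Δ) =
      #(famInter (insert C Γ) \ famUnion Δ) + #(famInter Γ \ famUnion (insert C Δ)) := by
  rw [famInter_insert C hΓ, famUnion_insert, inter_sdiff_assoc, inter_comm, union_comm,
    ← sup_eq_union, ← sdiff_sdiff_left, card_inter_add_card_sdiff]

end FamUnionInter

namespace IsHKE

variable {F Γ Δ : Finset (Finset ℕ)} {α : ℕ} {A B : Finset ℕ}

theorem card_eq (hF : IsHKE F α) (hB : B ∈ F) : #B = α := by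
  have h := hF.2 {B} (singleton_subset_iff.2 hB) (singleton_nonempty B)
  rw [famUnion_singleton, famInter_singleton] at h
  omega

theorem card_sdiff_famUnion (hF : IsHKE F α) (hA : A ∈ F) (hΔF : Δ ⊆ F) (hΔ : Δ.Nonempty) :
    #(A \ famUnion Δ) = #(famInter Δ \ A) := by
  have hsum := hF.2 Δ hΔF hΔ
  have hsum_insert := hF.2 (insert A Δ) (insert_subset hA hΔF) (insert_nonempty A Δ)
  rw [famUnion_insert, famInter_insert A hΔ] at hsum_insert
  have hunion := card_sdiff_add_card A (famUnion Δ)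
  have hinter := card_inter_add_card_sdiff (famInter Δ) A
  rw [inter_comm] at hinter
  omega

theorem card_famInter_sdiff_famUnion_comm (hF : IsHKE F α) (hΓF : Γ ⊆ F) (hΓ : Γ.Nonempty)
    (hΔF : Δ ⊆ F) (hΔ : Δ.Nonempty) :
    #(famInter Γ \ famUnion Δ) = #(famInter Δ \ famUnion Γ) := by
  induction hΓ using Finset.Nonempty.cons_induction generalizing Δ with
  | singleton A =>
    rw [famInter_singleton, famUnion_singleton]
    exact hF.card_sdiff_famUnion (singleton_subset_iff.1 hΓF) hΔF hΔ
  | cons C Γ _ hΓ ih =>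
    rw [cons_eq_insert] at hΓF ⊢
    obtain ⟨hCF, hΓF⟩ := insert_subset_iff.1 hΓF
    have hcomm := ih hΓF hΔF hΔ
    have hcomm_insert := ih hΓF (insert_subset hCF hΔF) (insert_nonempty C Δ)
    have hsplit := card_famInter_sdiff_famUnion_eq_add (Δ := Δ) C hΓ
    have hsplit_swap := card_famInter_sdiff_famUnion_eq_add (Δ := Γ) C hΔ
    omega

end IsHKE

theorem exists_injOn_comp_eq {V W κ : Type*} [Nonempty W] {S : Set V} (hS : S.Finite)
    {g : V → κ} {h : W → κ} (hle : ∀ k, {x ∈ S | g x = k}.encard ≤ {y | h y = k}.encard) :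
    ∃ f : V → W, Set.InjOn f S ∧ ∀ x ∈ S, h (f x) = g x := by
  choose φ hφ_maps hφ_inj using fun k =>
    (hS.subset (Set.sep_subset S (g · = k))).exists_injOn_of_encard_le (hle k)
  have hφ : ∀ x ∈ S, h (φ (g x) x) = g x := fun x hx => hφ_maps (g x) ⟨hx, rfl⟩
  refine ⟨fun x => φ (g x) x, fun x hx y hy (hxy : φ (g x) x = φ (g y) y) => ?_, hφ⟩
  have hg : g x = g y := by rw [← hφ x hx, hxy, hφ y hy]
  rw [← hg] at hxy
  exact hφ_inj (g x) ⟨hx, rfl⟩ ⟨hy, hg.symm⟩ hxy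

theorem infinite_setOf_filter_mem_eq_empty (F : Finset (Finset ℕ)) :
    {y : ℕ | {B ∈ F | y ∈ B} = ∅}.Infinite := by
  refine (famUnion F).finite_toSet.infinite_compl.mono fun y hy => ?_
  exact filter_eq_empty_iff.2 fun B hB hyB => hy (subset_famUnion hB hyB)

namespace IsHKE

variable {F : Finset (Finset ℕ)} {α : ℕ}

theorem encard_filter_notMem_eq_le (hF : IsHKE F α) (k : Finset (Finset ℕ)) :
    {x ∈ (famUnion F : Set ℕ) | {B ∈ F | x ∉ B} = k}.encard ≤
      {y : ℕ | {B ∈ F | y ∈ B} = k}.encard := by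
  obtain hempty | ⟨x, hxF, hxk⟩ :=
    {x ∈ (famUnion F : Set ℕ) | {B ∈ F | x ∉ B} = k}.eq_empty_or_nonempty
  · rw [hempty, Set.encard_empty]
    exact zero_le
  obtain rfl | hk := k.eq_empty_or_nonempty
  · rw [(infinite_setOf_filter_mem_eq_empty F).encard_eq]
    exact le_top
  have hkF : k ⊆ F := hxk ▸ filter_subset _ F
  have hFk : (F \ k).Nonempty := by
    obtain ⟨B, hB, hxB⟩ := mem_famUnion.1 hxF
    exact ⟨B, by simp [← hxk, hB, hxB]⟩
  have hsource : {z ∈ (famUnion F : Set ℕ) | {B ∈ F | z ∉ B} = k} ⊆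
      (famInter (F \ k) \ famUnion k : Finset ℕ) := by
    rintro z ⟨-, rfl⟩
    rw [mem_coe, mem_famInter_sdiff_famUnion hFk]
    grind
  have htarget : ((famInter k \ famUnion (F \ k) : Finset ℕ) : Set ℕ) ⊆
      {y | {B ∈ F | y ∈ B} = k} := fun y hy => by
    rw [mem_coe, mem_famInter_sdiff_famUnion hk] at hy
    grind
  calc {z ∈ (famUnion F : Set ℕ) | {B ∈ F | z ∉ B} = k}.encard
      ≤ #(famInter (F \ k) \ famUnion k) := by
        simpa only [Set.encard_coe_eq_coe_finsetCard] using Set.encard_le_encard hsource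
    _ = #(famInter k \ famUnion (F \ k)) := by
        rw [hF.card_famInter_sdiff_famUnion_comm sdiff_subset hFk hkF hk]
    _ ≤ {y | {B ∈ F | y ∈ B} = k}.encard := by
        simpa only [Set.encard_coe_eq_coe_finsetCard] using Set.encard_le_encard htarget

theorem exists_injOn_mem_iff_notMem (hF : IsHKE F α) :
    ∃ f : ℕ → ℕ, Set.InjOn f (famUnion F) ∧
      ∀ x ∈ famUnion F, ∀ B ∈ F, (f x ∈ B ↔ x ∉ B) := by
  obtain ⟨f, hf_inj, hf⟩ :=
    exists_injOn_comp_eq (famUnion F).finite_toSet hF.encard_filter_notMem_eq_le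
  refine ⟨f, hf_inj, fun x hx B hB => ?_⟩
  simpa [hB] using Finset.ext_iff.1 (hf x hx) B

end IsHKE

section Pairing

variable {V : Type*}

/-- `f` maps the finite set `A` injectively to a set disjoint from `A`, so that the pairs
`{x, f x}` with `x ∈ A` are pairwise disjoint. -/
structure IsPairing (f : V → V) (A : Finset V) : Prop where
  injOn : Set.InjOn f A
  notMem : ∀ x ∈ A, f x ∉ A

variable [DecidableEq V]

/-- `B` consists of exactly one element of each pair `{x, f x}` with `x ∈ A`. This is meant for
`f` satisfying `IsPairing f A`. -/
structure IsPairTransversal (f : V → V) (A B : Finset V) : Prop where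
  subset : B ⊆ A ∪ A.image f
  mem_iff_notMem : ∀ x ∈ A, (f x ∈ B ↔ x ∉ B)

/-- The transversal of the pairs `{x, f x}` with `x ∈ A` that meets `A` in the given subset `E`. -/
def pairTransversal (f : V → V) (A E : Finset V) : Finset V :=
  E ∪ (A \ E).image f

variable {f : V → V} {A B E S T : Finset V}

namespace IsPairing

theorem card_eq_card_filter_add (hf : IsPairing f A) (hS : S ⊆ A ∪ A.image f) :
    #S = #{x ∈ A | x ∈ S} + #{x ∈ A | f x ∈ S} := by
  have hdisj : Disjoint {x ∈ A | x ∈ S} ({x ∈ A | f x ∈ S}.image f) := by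
    rw [disjoint_left]
    grind [hf.notMem]
  have hinj : Set.InjOn f ↑{x ∈ A | f x ∈ S} := hf.injOn.mono (coe_subset.2 (filter_subset _ A))
  have hunion : S = {x ∈ A | x ∈ S} ∪ {x ∈ A | f x ∈ S}.image f := by
    grind
  rw [← card_image_of_injOn hinj, ← card_union_of_disjoint hdisj, ← hunion]

theorem card_add_card_eq_two_mul (hf : IsPairing f A) (hS : S ⊆ A ∪ A.image f)
    (hT : T ⊆ A ∪ A.image f) (hST : ∀ x ∈ A, (f x ∈ S ↔ x ∉ T))
    (hTS : ∀ x ∈ A, (f x ∈ T ↔ x ∉ S)) : #S + #T = 2 * #A := by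
  have hcardS := hf.card_eq_card_filter_add hS
  have hcardT := hf.card_eq_card_filter_add hT
  rw [filter_congr hST] at hcardS
  rw [filter_congr hTS] at hcardT
  have hsplitS := card_filter_add_card_filter_not (s := A) (· ∈ S)
  have hsplitT := card_filter_add_card_filter_not (s := A) (· ∈ T)
  omega

theorem isPairTransversal_of_card_le (hf : IsPairing f A)
    (hB : ∀ x ∈ A, (f x ∈ B ↔ x ∉ B)) (hcard : #B ≤ #A) : IsPairTransversal f A B := by
  have hmem : ∀ x ∈ A, (f x ∈ B ∩ (A ∪ A.image f) ↔ x ∉ B ∩ (A ∪ A.image f)) := by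
    grind
  have hinter := hf.card_add_card_eq_two_mul inter_subset_right inter_subset_right hmem hmem
  have heq : B ∩ (A ∪ A.image f) = B := eq_of_subset_of_card_le inter_subset_left (by omega)
  exact ⟨inter_eq_left.1 heq, hB⟩

theorem inter_pairTransversal (hf : IsPairing f A) (hE : E ⊆ A) :
    A ∩ pairTransversal f A E = E := by
  grind [pairTransversal, hf.notMem]

theorem map_mem_pairTransversal (hf : IsPairing f A) (hE : E ⊆ A) {x : V} (hx : x ∈ A) :
    f x ∈ pairTransversal f A E ↔ x ∉ E := by
  have hfxE : f x ∉ E := fun h => hf.notMem x hx (hE h)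
  rw [pairTransversal, mem_union, or_iff_right hfxE, ← mem_coe, coe_image,
    hf.injOn.mem_image_iff (by simp) hx]
  simp [hx]

theorem isPairTransversal_pairTransversal (hf : IsPairing f A) (hE : E ⊆ A) :
    IsPairTransversal f A (pairTransversal f A E) where
  subset := union_subset_union hE (image_subset_image sdiff_subset)
  mem_iff_notMem x hx := by
    have hxE : x ∈ pairTransversal f A E ↔ x ∈ E := by
      simpa [hx] using Finset.ext_iff.1 (hf.inter_pairTransversal hE) x
    rw [hf.map_mem_pairTransversal hE hx, hxE]

end IsPairing

end Pairing

section PairTransversalCollections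

variable {F : Finset (Finset ℕ)} {α : ℕ} {f : ℕ → ℕ} {A E : Finset ℕ}

theorem IsPairing.isHKE (hf : IsPairing f A) (hA : A.Nonempty)
    (hF : ∀ B ∈ F, IsPairTransversal f A B) : IsHKE F #A := by
  refine ⟨hA.card_pos, fun Γ hΓF hΓ => ?_⟩
  have hsub : famUnion Γ ⊆ A ∪ A.image f := Finset.sup_le fun B hB => (hF B (hΓF hB)).subset
  have hmem : ∀ x ∈ A, ∀ B ∈ Γ, (f x ∈ B ↔ x ∉ B) :=
    fun x hx B hB => (hF B (hΓF hB)).mem_iff_notMem x hx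
  exact hf.card_add_card_eq_two_mul hsub ((filter_subset _ _).trans hsub)
    (fun x hx => mem_famUnion_iff_notMem_famInter hΓ (hmem x hx))
    (fun x hx => mem_famInter_iff_notMem_famUnion hΓ (hmem x hx))

theorem IsHKE.exists_isPairing (hF : IsHKE F α) (hA : A ∈ F) :
    ∃ f, IsPairing f A ∧ ∀ B ∈ F, IsPairTransversal f A B := by
  obtain ⟨f, hf_inj, hf⟩ := hF.exists_injOn_mem_iff_notMem
  have hAF : A ⊆ famUnion F := subset_famUnion hA
  have hpair : IsPairing f A :=
    ⟨hf_inj.mono (coe_subset.2 hAF), fun x hx hfx => (hf x (hAF hx) A hA).1 hfx hx⟩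
  refine ⟨f, hpair, fun B hB => hpair.isPairTransversal_of_card_le (fun x hx => ?_) ?_⟩
  · exact hf x (hAF hx) B hB
  · rw [hF.card_eq hA, hF.card_eq hB]

theorem pairTransversal_sdiff_famUnion (hA : A ∈ F) (hE : E ⊆ A)
    (hF : ∀ B ∈ F, ∀ x ∈ A, (f x ∈ B ↔ x ∉ B)) :
    pairTransversal f A E \ famUnion F = (famInter F \ E).image f := by
  have hmem : ∀ x ∈ A, (f x ∈ famUnion F ↔ x ∉ famInter F) :=
    fun x hx => mem_famUnion_iff_notMem_famInter ⟨A, hA⟩ fun B hB => hF B hB x hx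
  have hAF : A ⊆ famUnion F := subset_famUnion hA
  have hFA : famInter F ⊆ A := famInter_subset hA
  grind [pairTransversal]

end PairTransversalCollections

/-- for an hke collection `F`, `A ∈ F` and `E ⊆ A`, there is a finite set `D`
with `A ∩ D = E`, such that `F ∪ {D}` is an hke collection and `|D − ⋃F| = |⋂F − E|`;
in particular, if `⋂F = ∅` then `D ⊆ ⋃F`. -/
theorem exists_extension_set (F : Finset (Finset ℕ)) (α : ℕ) (hF : IsHKE F α)
    (A : Finset ℕ) (hA : A ∈ F) (E : Finset ℕ) (hE : E ⊆ A) :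
    ∃ D : Finset ℕ,
      A ∩ D = E ∧
      (∃ β, IsHKE (insert D F) β) ∧
      (D \ famUnion F).card = (famInter F \ E).card ∧
      (famInter F = ∅ → D ⊆ famUnion F) := by
  obtain ⟨f, hf, htrans⟩ := hF.exists_isPairing hA
  have hA_nonempty : A.Nonempty := card_pos.1 (hF.card_eq hA ▸ hF.1)
  have hsdiff := pairTransversal_sdiff_famUnion hA hE fun B hB => (htrans B hB).mem_iff_notMem
  refine ⟨pairTransversal f A E, hf.inter_pairTransversal hE, ⟨#A, ?_⟩, ?_, fun hempty => ?_⟩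
  · exact hf.isHKE hA_nonempty <|
      forall_mem_insert _ _ _ |>.2 ⟨hf.isPairTransversal_pairTransversal hE, htrans⟩
  · rw [hsdiff]
    exact card_image_of_injOn <|
      hf.injOn.mono <| coe_subset.2 <| sdiff_subset.trans (famInter_subset hA)
  · rw [← sdiff_eq_empty_iff_subset, hsdiff, hempty, empty_sdiff, image_empty]
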